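/- Let f* : C → D be a symmetric monoidal functor between closed symmetric monoidal categories, with adjunctions f* ⊣ f_* ⊣ f^!. For every dualizable object M ∈ C and every X ∈ D, the canonical morphism f*(M) ⊗ f^!(X) → f^!(M ⊗ X) is an isomorphism. -/

import Mathlib

/-!
STATEMENT 4: Let f* : C → D be a symmetric monoidal functor between closed symmetric monoidal
categories, with adjunctions f* ⊣ f_* ⊣ f^!.  For every dualizable object M ∈ C and every
object X, the canonical morphism f*(M) ⊗ f^!(X) → f^!(M ⊗ X) is an isomorphism.  The morphism
is adjoint (under f_* ⊣ f^!) to the composite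
  f_*(f*M ⊗ f^!X) ≅ M ⊗ f_*f^!X → M ⊗ X,
where the first isomorphism is the inverse of the projection formula morphism `projMap`
(an isomorphism since M is dualizable) and the second map uses the counit of f_* ⊣ f^!.
-/

open CategoryTheory CategoryTheory.MonoidalCategory

universe v u

/-- The canonical projection morphism `M ⊗ f_*(Z) → f_*(f*(M) ⊗ Z)`. -/
def projMap {C D : Type u} [Category.{v} C] [Category.{v} D]
    [MonoidalCategory C] [MonoidalCategory D]
    (fstar : C ⥤ D) [fstar.Monoidal] (fpush : D ⥤ C) (adj : fstar ⊣ fpush)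
    (M : C) (Z : D) :
    M ⊗ fpush.obj Z ⟶ fpush.obj (fstar.obj M ⊗ Z) :=
  adj.unit.app (M ⊗ fpush.obj Z) ≫
    fpush.map (Functor.OplaxMonoidal.δ fstar M (fpush.obj Z) ≫
      (fstar.obj M ◁ adj.counit.app Z))

/-!
Dualizable objects `M` act on `C` by `M ⊗ -` and on `D` by `f* M ⊗ -`, and `f*` is linear for these
actions. The right adjoint of an oplax linear functor is lax linear, and over a rigid category a
lax linear functor is automatically strong: a dual pair `(M, N)` lets one invert
`M ⊙ G d ⟶ G (M ⊙ d)` by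
`G (M ⊙ d) ⟶ M ⊙ N ⊙ G (M ⊙ d) ⟶ M ⊙ G (N ⊙ M ⊙ d) ⟶ M ⊙ G d`.
Applied to `f* ⊣ f_*`, this is the projection formula. It makes `f_*` strong linear, so the same
argument applies to `f_* ⊣ f^!`, and the lax structure of `f^!` is the canonical morphism.
-/

open MonoidalLeftAction Functor.LaxLeftLinear Functor.OplaxLeftLinear Functor.OplaxMonoidal

section LinearFunctor

variable {E 𝓜 𝓝 : Type*} [Category* E] [MonoidalCategory E] [Category* 𝓜] [Category* 𝓝]
  [MonoidalLeftAction E 𝓜] [MonoidalLeftAction E 𝓝]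

/-- Doctrinal adjunction: the lax linear structure on the right adjoint of an oplax linear
functor, given by the mates of the oplax structure maps. -/
abbrev rightAdjointLaxLeftLinear {F : 𝓜 ⥤ 𝓝} {G : 𝓝 ⥤ 𝓜} (adj : F ⊣ G) [F.OplaxLeftLinear E] :
    G.LaxLeftLinear E where
  μₗ c d := adj.homEquiv _ _ (δₗ F c (G.obj d) ≫ c ⊴ₗ adj.counit.app d)
  μₗ_naturality_left f d := by
    rw [← adj.homEquiv_naturality_left, ← adj.homEquiv_naturality_right,
      δₗ_naturality_left_assoc, Category.assoc, action_exchange]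
  μₗ_naturality_right c d d' g := by
    rw [← adj.homEquiv_naturality_left, ← adj.homEquiv_naturality_right,
      δₗ_naturality_right_assoc, Category.assoc, ← actionHomRight_comp, ← actionHomRight_comp,
      adj.counit_naturality]
  μₗ_associativity c c' d := by
    rw [← adj.homEquiv_naturality_right, ← adj.homEquiv_naturality_left,
      ← adj.homEquiv_naturality_left]
    congr 1
    rw [δₗ_naturality_right_assoc, ← actionHomRight_comp]
    simp only [tensor_actionHomRight, Category.assoc, Iso.inv_hom_id, Category.comp_id]
    rw [δₗ_associativity_assoc, ← actionHomRight_comp, ← adj.homEquiv_counit,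
      Equiv.symm_apply_apply]
  μₗ_unitality d := by
    rw [← adj.homEquiv_naturality_right, Category.assoc, unit_actionHomRight, Category.assoc,
      Category.assoc, Iso.inv_hom_id, Category.comp_id, δₗ_unitality_hom_assoc,
      ← adj.homEquiv_counit, Equiv.apply_symm_apply]

/-- The oplax linear structure on a lax linear functor whose structure maps are invertible, given
by their inverses. -/
noncomputable abbrev oplaxLeftLinearOfIsIso (G : 𝓝 ⥤ 𝓜) [G.LaxLeftLinear E]
    [∀ (c : E) (d : 𝓝), IsIso (μₗ G c d)] : G.OplaxLeftLinear E where
  δₗ c d := inv (μₗ G c d)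
  δₗ_naturality_left f d := by
    rw [IsIso.comp_inv_eq, Category.assoc, μₗ_naturality_left, IsIso.inv_hom_id_assoc]
  δₗ_naturality_right c _ _ f := by
    rw [IsIso.comp_inv_eq, Category.assoc, μₗ_naturality_right, IsIso.inv_hom_id_assoc]
  δₗ_associativity c c' d := by
    rw [IsIso.inv_comp_eq, ← Category.assoc, μₗ_associativity]
    simp
  δₗ_unitality_inv d := by
    rw [← μₗ_unitality_inv G d, Category.assoc, IsIso.hom_inv_id, Category.comp_id]

end LinearFunctor

section Duality

variable {E 𝓜 𝓝 : Type*} [Category* E] [MonoidalCategory E] [Category* 𝓜] [Category* 𝓝]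
  [MonoidalLeftAction E 𝓜] [MonoidalLeftAction E 𝓝]

/-- The action of the coevaluation of a dual pair `(M, N)`: the unit of the adjunction between
the functors `N ⊙ₗ -` and `M ⊙ₗ -`. -/
def actionCoevaluation (M N : E) [ExactPairing M N] (d : 𝓜) : d ⟶ M ⊙ₗ N ⊙ₗ d :=
  (λₗ d).inv ≫ η_ M N ⊵ₗ d ≫ (αₗ M N d).hom

/-- The action of the evaluation of a dual pair `(M, N)`: the counit of the adjunction between
the functors `N ⊙ₗ -` and `M ⊙ₗ -`. -/
def actionEvaluation (M N : E) [ExactPairing M N] (d : 𝓜) : N ⊙ₗ M ⊙ₗ d ⟶ d :=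
  (αₗ N M d).inv ≫ ε_ M N ⊵ₗ d ≫ (λₗ d).hom

theorem actionCoevaluation_naturality (M N : E) [ExactPairing M N] {d d' : 𝓜} (f : d ⟶ d') :
    f ≫ actionCoevaluation M N d' = actionCoevaluation M N d ≫ M ⊴ₗ N ⊴ₗ f := by
  simp only [actionCoevaluation, Category.assoc]
  rw [← actionUnitIso_inv_naturality_assoc, action_exchange_assoc, tensor_actionHomRight]
  simp

theorem actionCoevaluation_actionEvaluation (M N : E) [ExactPairing M N] (d : 𝓜) :
    actionCoevaluation M N (M ⊙ₗ d) ≫ M ⊴ₗ actionEvaluation M N d = 𝟙 (M ⊙ₗ d) := by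
  have leftUnitor : (λₗ[E] (M ⊙ₗ d)).inv ≫ (αₗ (𝟙_ E) M d).inv = (λ_ M).inv ⊵ₗ d := by
    rw [← cancel_mono ((λ_ M).hom ⊵ₗ d), inv_hom_actionHomLeft]
    simp
  have associator : (α_ M N M).hom ⊵ₗ d = (αₗ (M ⊗ N) M d).hom ≫ (αₗ M N (M ⊙ₗ d)).hom ≫
      M ⊴ₗ (αₗ N M d).inv ≫ (αₗ M (N ⊗ M) d).inv := by
    rw [← associator_actionHom_assoc]
    simp
  calc
    _ = (λ_ M).inv ⊵ₗ d ≫ (η_ M N ▷ M) ⊵ₗ d ≫ (α_ M N M).hom ⊵ₗ d ≫ (M ◁ ε_ M N) ⊵ₗ d ≫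
        (ρ_ M).hom ⊵ₗ d := by
      simp [actionCoevaluation, actionEvaluation, ← leftUnitor, associator]
    _ = ((λ_ M).inv ≫ (η_ M N ▷ M ≫ (α_ M N M).hom ≫ M ◁ ε_ M N) ≫ (ρ_ M).hom) ⊵ₗ d := by
      simp only [comp_actionHomLeft, Category.assoc]
    _ = 𝟙 (M ⊙ₗ d) := by
      rw [ExactPairing.evaluation_coevaluation]
      simp

section

variable (G : 𝓝 ⥤ 𝓜) [G.LaxLeftLinear E] (M N : E) [ExactPairing M N]

theorem actionCoevaluation_comp_μₗ (d : 𝓝) :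
    actionCoevaluation M N (G.obj d) ≫ M ⊴ₗ μₗ G N d ≫ μₗ G M (N ⊙ₗ d) =
      G.map (actionCoevaluation M N d) := by
  simp only [actionCoevaluation, Category.assoc, G.map_comp]
  rw [← μₗ_associativity, μₗ_naturality_left_assoc, μₗ_unitality_inv_assoc]

theorem μₗ_comp_map_actionEvaluation (d : 𝓝) :
    N ⊴ₗ μₗ G M d ≫ μₗ G N (M ⊙ₗ d) ≫ G.map (actionEvaluation M N d) =
      actionEvaluation M N (G.obj d) := by
  simp only [actionEvaluation, G.map_comp]
  rw [μₗ_associativity_inv_assoc, ← μₗ_naturality_left_assoc, ← μₗ_unitality]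

end

instance isIso_μₗ_of_hasRightDual (G : 𝓝 ⥤ 𝓜) [G.LaxLeftLinear E] (M : E) [HasRightDual M]
    (d : 𝓝) : IsIso (μₗ G M d) := by
  let N : E := Mᘁ
  refine ⟨actionCoevaluation M N (G.obj (M ⊙ₗ d)) ≫
    M ⊴ₗ (μₗ G N (M ⊙ₗ d) ≫ G.map (actionEvaluation M N d)), ?_, ?_⟩
  · rw [reassoc_of% actionCoevaluation_naturality M N, ← actionHomRight_comp,
      μₗ_comp_map_actionEvaluation, actionCoevaluation_actionEvaluation]
  · rw [actionHomRight_comp, Category.assoc, Category.assoc, μₗ_naturality_right,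
      reassoc_of% actionCoevaluation_comp_μₗ G M N, ← G.map_comp,
      actionCoevaluation_actionEvaluation, G.map_id]

theorem isIso_homEquiv_inv_μₗ [RightRigidCategory E] {G : 𝓝 ⥤ 𝓜} {H : 𝓜 ⥤ 𝓝}
    [G.LaxLeftLinear E] (adj : G ⊣ H) (c : E) (x : 𝓜) :
    IsIso (adj.homEquiv _ _ (inv (μₗ G c (H.obj x)) ≫ c ⊴ₗ adj.counit.app x)) :=
  let : G.OplaxLeftLinear E := oplaxLeftLinearOfIsIso G
  let : H.LaxLeftLinear E := rightAdjointLaxLeftLinear adj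
  isIso_μₗ_of_hasRightDual H c x

end Duality

section TensorAction

variable {E C D : Type*} [Category* E] [Category* C] [Category* D]
  [MonoidalCategory E] [MonoidalCategory C] [MonoidalCategory D]

/-- The action `c ⊙ₗ d = J c ⊗ d` induced by a monoidal functor `J`. -/
abbrev tensorLeftAction (J : E ⥤ C) [J.Monoidal] : MonoidalLeftAction E C :=
  actionOfMonoidalFunctorToEndofunctorMop (J ⋙ curriedActionMop C C)

/-- A monoidal functor `F : C ⥤ D` is oplax linear over any `J : E ⥤ C`, where `E` acts on `C`
through `J` and on `D` through `J ⋙ F`. -/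
abbrev oplaxLeftLinearOfMonoidal (J : E ⥤ C) [J.Monoidal] (F : C ⥤ D) [F.Monoidal] :
    letI := tensorLeftAction J
    letI := tensorLeftAction (J ⋙ F)
    F.OplaxLeftLinear E :=
  letI := tensorLeftAction J
  letI := tensorLeftAction (J ⋙ F)
  { δₗ c d := δ F (J.obj c) d
    δₗ_naturality_left f d := (δ_natural_left F (J.map f) d).symm
    δₗ_naturality_right c _ _ g := (δ_natural_right F (J.obj c) g).symm
    δₗ_associativity c c' d := by
      change δ F (J.obj (c ⊗ c')) d ≫ (F.map (δ J c c') ≫ δ F _ _) ▷ F.obj d ≫ (α_ _ _ _).hom =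
        F.map (δ J c c' ▷ d ≫ (α_ _ _ _).hom) ≫ δ F _ _ ≫ F.obj (J.obj c) ◁ δ F _ d
      rw [F.map_comp, Category.assoc, ← associativity, ← δ_natural_left_assoc,
        comp_whiskerRight_assoc]
    δₗ_unitality_inv d := by
      change (λ_ (F.obj d)).inv ≫ (Functor.LaxMonoidal.ε F ≫ F.map (Functor.LaxMonoidal.ε J)) ▷
        F.obj d = F.map ((λ_ d).inv ≫ Functor.LaxMonoidal.ε J ▷ d) ≫ δ F _ d
      rw [F.map_comp, Category.assoc, ← δ_natural_left, left_unitality_assoc]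
      simp }

end TensorAction

section Dualizable

variable (C : Type*) [Category* C] [MonoidalCategory C]

/-- The property of having a right dual. In a braided category, where left and right duals agree,
these are the dualizable objects. -/
def isRightDualizable : ObjectProperty C :=
  fun X => Nonempty (HasRightDual X)

instance isMonoidal_isRightDualizable : (isRightDualizable C).IsMonoidal where
  prop_unit := ⟨hasRightDualUnit⟩
  prop_tensor _ _ := fun ⟨_⟩ ⟨_⟩ => ⟨hasRightDualTensor⟩

-- The braiding makes `X` a right dual of `Xᘁ`, so that `Xᘁ` lies in the subcategory again.
noncomputable instance rightRigidCategory_isRightDualizable [BraidedCategory C] :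
    RightRigidCategory (isRightDualizable C).FullSubcategory where
  rightDual X :=
    letI : HasRightDual X.obj := X.property.some
    letI : ExactPairing X.objᘁ X.obj := BraidedCategory.exactPairing_swap X.obj X.objᘁ
    letI Y : (isRightDualizable C).FullSubcategory := ⟨X.objᘁ, ⟨⟨X.obj⟩⟩⟩
    letI : ExactPairing ((isRightDualizable C).ι.obj X) ((isRightDualizable C).ι.obj Y) :=
      HasRightDual.exact (X := X.obj)
    letI : ExactPairing X Y := .ofFullyFaithful (isRightDualizable C).ι X Y
    ⟨Y⟩

end Dualizable

section ProjectionFormula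

variable {C D : Type u} [Category.{v} C] [Category.{v} D] [MonoidalCategory C]
  [MonoidalCategory D] (fstar : C ⥤ D) [fstar.Monoidal] (fpush : D ⥤ C) (adj : fstar ⊣ fpush)

theorem projMap_eq_homEquiv (M : C) (Z : D) :
    projMap fstar fpush adj M Z =
      adj.homEquiv _ _ (δ fstar M (fpush.obj Z) ≫ fstar.obj M ◁ adj.counit.app Z) :=
  (adj.homEquiv_unit ..).symm

instance isIso_projMap (M : C) [HasRightDual M] (Z : D) : IsIso (projMap fstar fpush adj M Z) := by
  let := tensorLeftAction (𝟭 C)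
  let := tensorLeftAction (𝟭 C ⋙ fstar)
  let := oplaxLeftLinearOfMonoidal (𝟭 C) fstar
  let : fpush.LaxLeftLinear C := rightAdjointLaxLeftLinear adj
  rw [projMap_eq_homEquiv]
  exact isIso_μₗ_of_hasRightDual fpush M Z

theorem stmt_4_general [BraidedCategory C] (fexc : C ⥤ D) (adj' : fpush ⊣ fexc)
    (M : C) [HasRightDual M] (X : C) :
    IsIso ((adj'.homEquiv (fstar.obj M ⊗ fexc.obj X) (M ⊗ X))
      (inv (projMap fstar fpush adj M (fexc.obj X)) ≫ (M ◁ adj'.counit.app X))) := by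
  let ι := (isRightDualizable C).ι
  let M' : (isRightDualizable C).FullSubcategory := ⟨M, ⟨‹_›⟩⟩
  let := tensorLeftAction ι
  let := tensorLeftAction (ι ⋙ fstar)
  let := oplaxLeftLinearOfMonoidal ι fstar
  let : fpush.LaxLeftLinear (isRightDualizable C).FullSubcategory := rightAdjointLaxLeftLinear adj
  simp only [projMap_eq_homEquiv]
  exact isIso_homEquiv_inv_μₗ adj' M' X

end ProjectionFormula

theorem stmt_4 {C D : Type u} [Category.{v} C] [Category.{v} D]
    [MonoidalCategory C] [MonoidalCategory D]
    [SymmetricCategory C] [SymmetricCategory D]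
    [MonoidalClosed C] [MonoidalClosed D]
    (fstar : C ⥤ D) [fstar.Monoidal]
    (fpush : D ⥤ C) (adj : fstar ⊣ fpush)
    (fexc : C ⥤ D) (adj' : fpush ⊣ fexc)
    (M : C) [HasRightDual M]
    [∀ Z : D, IsIso (projMap fstar fpush adj M Z)]
    (X : C) :
    IsIso ((adj'.homEquiv (fstar.obj M ⊗ fexc.obj X) (M ⊗ X))
      (inv (projMap fstar fpush adj M (fexc.obj X)) ≫ (M ◁ adj'.counit.app X))) :=
  stmt_4_general fstar fpush adj fexc adj' M X
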